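/- Let n > m ≥ 1, let A, A_ε ∈ ℂ^{n×n} with A invertible and A_ε invertible, and let U ∈ ℂ^{n×m} have full column rank and be such that U*AU is invertible. Define B = A_ε⁻¹(I − A U (U*AU)⁻¹ U*) + U (U*AU)⁻¹ U*. Then 1 is an eigenvalue of A B whose eigenspace has dimension at least m, i.e. dim ker(A B − I) ≥ m. -/

import Mathlib

open Matrix
open scoped ComplexOrder

/-!
The coarse correction `U (V A U)⁻¹ V` maps `A U` to `U`, so the deflation factor
`1 - A U (V A U)⁻¹ V` annihilates `A U`, whatever approximate inverse is applied afterwards.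
Hence `B A U = U` and `A B (A U) = A U`: the column span of `A U` consists of fixed vectors of
`A B`. Its dimension is the number of columns because `V (A U)` is invertible.
-/

section Deflation

variable {R l m n : Type*} [CommRing R] [Fintype m] [Fintype n]

theorem mulVec_injective_of_isUnit_mul {S : Type*} [Semiring S] [DecidableEq m]
    {V : Matrix m n S} {X : Matrix n m S} (hVX : IsUnit (V * X)) : Function.Injective X.mulVec := by
  have hcomp : Function.Injective (V.mulVec ∘ X.mulVec) := by
    simpa only [Function.comp_def, mulVec_mulVec] using mulVec_injective_of_isUnit hVX
  exact hcomp.of_comp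

theorem card_le_finrank_ker_mulVecLin_of_mul_eq_zero [Nontrivial R]
    {N : Matrix l n R} {X : Matrix n m R} (hX : Function.Injective X.mulVec) (hNX : N * X = 0) :
    Fintype.card m ≤ Module.finrank R (LinearMap.ker N.mulVecLin) := by
  have hle : LinearMap.range X.mulVecLin ≤ LinearMap.ker N.mulVecLin := by
    rw [LinearMap.range_le_ker_iff, ← mulVecLin_mul, hNX, mulVecLin_zero]
  have hfin : Module.rank R (LinearMap.ker N.mulVecLin) < Cardinal.aleph0 :=
    (Submodule.rank_le _).trans_lt (Module.rank_lt_aleph0 R (n → R))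
  calc
    Fintype.card m = Module.finrank R (LinearMap.range X.mulVecLin) := by
      rw [LinearMap.finrank_range_of_inj hX, Module.finrank_fintype_fun_eq_card]
    _ ≤ Module.finrank R (LinearMap.ker N.mulVecLin) :=
      Cardinal.toNat_le_toNat (Submodule.rank_mono hle) hfin

variable [DecidableEq m]

theorem mul_nonsing_inv_mul_mul_cancel {p : Type*} [Fintype p] {V : Matrix m n R}
    {A : Matrix n p R} {U : Matrix p m R} (hVAU : IsUnit (V * A * U)) (X : Matrix l m R) :
    X * (V * A * U)⁻¹ * V * (A * U) = X := by
  rw [Matrix.mul_assoc _ V, ← Matrix.mul_assoc V,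
    nonsing_inv_mul_cancel_right _ _ ((isUnit_iff_isUnit_det _).mp hVAU)]

variable [DecidableEq n]

/-- The projection-based (deflation-type) preconditioner of `A` built from an approximate inverse
`M`, the restriction `V` and the prolongation `U`. The paper's `B` has `M = A_ε⁻¹` and `V = U*`.
The coarse matrix `V * A * U` is meant to be invertible: `⁻¹` is `0` on non-units. -/
noncomputable def deflationPreconditioner (A M : Matrix n n R) (U : Matrix n m R)
    (V : Matrix m n R) : Matrix n n R :=
  M * (1 - A * U * (V * A * U)⁻¹ * V) + U * (V * A * U)⁻¹ * V

theorem deflationPreconditioner_mul_mul {A : Matrix n n R} {U : Matrix n m R} {V : Matrix m n R}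
    (hVAU : IsUnit (V * A * U)) (M : Matrix n n R) :
    deflationPreconditioner A M U V * (A * U) = U := by
  have hdefl : (1 - A * U * (V * A * U)⁻¹ * V) * (A * U) = 0 := by
    rw [Matrix.sub_mul, Matrix.one_mul, mul_nonsing_inv_mul_mul_cancel hVAU, sub_self]
  rw [deflationPreconditioner, Matrix.add_mul, Matrix.mul_assoc M, hdefl, Matrix.mul_zero,
    zero_add, mul_nonsing_inv_mul_mul_cancel hVAU]

theorem stmt_5_general [Nontrivial R] (A M : Matrix n n R) (U : Matrix n m R) (V : Matrix m n R)
    (hVAU : IsUnit (V * A * U)) :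
    Fintype.card m ≤
      Module.finrank R (LinearMap.ker (A * deflationPreconditioner A M U V - 1).mulVecLin) := by
  have hinj : Function.Injective (A * U).mulVec :=
    mulVec_injective_of_isUnit_mul (Matrix.mul_assoc V A U ▸ hVAU)
  have hfix : (A * deflationPreconditioner A M U V - 1) * (A * U) = 0 := by
    rw [Matrix.sub_mul, Matrix.mul_assoc, deflationPreconditioner_mul_mul hVAU, Matrix.one_mul,
      sub_self]
  exact card_le_finrank_ker_mulVecLin_of_mul_eq_zero hinj hfix

end Deflation

/-- For the projection-based preconditioner
`B = A_ε⁻¹(I − A U (U*AU)⁻¹ U*) + U (U*AU)⁻¹ U*`, the eigenvalue `1` of `A B` has an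
eigenspace of dimension at least `m`: `dim ker(A B − I) ≥ m`. -/
theorem stmt_5 (n m : ℕ) (hm : 1 ≤ m) (hnm : m < n)
    (A Aeps : Matrix (Fin n) (Fin n) ℂ) (hA : IsUnit A) (hAeps : IsUnit Aeps)
    (U : Matrix (Fin n) (Fin m) ℂ) (hU : Function.Injective U.mulVec)
    (hUAU : IsUnit (Uᴴ * A * U)) :
    let B : Matrix (Fin n) (Fin n) ℂ :=
      Aeps⁻¹ * (1 - A * U * (Uᴴ * A * U)⁻¹ * Uᴴ) + U * (Uᴴ * A * U)⁻¹ * Uᴴ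
    m ≤ Module.finrank ℂ (LinearMap.ker (A * B - 1).mulVecLin) :=
  (Fintype.card_fin m).ge.trans (stmt_5_general A Aeps⁻¹ U Uᴴ hUAU)
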